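/- Let M = P + εD ∈ 𝔻ℍ[t] be a monic motion polynomial and let G ∈ ℝ[t] be a monic real polynomial such that G divides ν(M) = M·M* and mrpf(G, P) = 1. Then there exist motion polynomials M₁, M₂ ∈ 𝔻ℍ[t] such that M₁ admits a factorization into monic linear motion polynomial factors, G = M₁·M₁*, and M = M₁·M₂. -/

import Mathlib

open Polynomial DualNumber TrivSqZeroExt

noncomputable section

/-- The real quaternions. -/
abbrev Hq : Type := Quaternion ℝ

/-- The dual quaternions. -/
abbrev DHq : Type := DualNumber Hq

/-- Conjugation of a dual quaternion: `(p + ε d)* = p* + ε d*`. -/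
instance : Star DHq := ⟨fun x => inl (star x.fst) + inr (star x.snd)⟩

/-- Coefficient-wise (quaternion) conjugation of a polynomial. -/
def cstar {R : Type*} [Semiring R] [Star R] (A : R[X]) : R[X] :=
  A.sum fun n a => Polynomial.C (star a) * Polynomial.X ^ n

/-- The embedding `ℝ[t] → ℍ[t]`. -/
def qPoly (f : ℝ[X]) : Hq[X] := f.map (algebraMap ℝ Hq)

/-- The embedding `ℍ[t] → 𝔻ℍ[t]` (primal part). -/
def dhQ (P : Hq[X]) : DHq[X] := P.map (inlHom Hq Hq)

/-- The embedding `ℝ[t] → 𝔻ℍ[t]`. -/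
def dPoly (f : ℝ[X]) : DHq[X] := dhQ (qPoly f)

/-- The dual quaternion polynomial `P + ε D` with primal part `P` and dual part `D`. -/
def mp (P D : Hq[X]) : DHq[X] := dhQ P + Polynomial.C ε * dhQ D

/-- The primal part of a dual quaternion polynomial. -/
def primal (A : DHq[X]) : Hq[X] := A.map (fstHom ℝ Hq Hq).toRingHom

/-- A motion polynomial: a dual quaternion polynomial whose norm polynomial
`ν(M) = M·M*` is a nonzero real polynomial. -/
def IsMotion (M : DHq[X]) : Prop := ∃ f : ℝ[X], f ≠ 0 ∧ M * cstar M = dPoly f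

/-- A real polynomial divides a quaternion polynomial. -/
def RDvdQ (f : ℝ[X]) (A : Hq[X]) : Prop := ∃ B : Hq[X], A = qPoly f * B

/-- A real polynomial divides a dual quaternion polynomial. -/
def RDvdD (f : ℝ[X]) (A : DHq[X]) : Prop := ∃ B : DHq[X], A = dPoly f * B

/-- `g` is the greatest common monic real polynomial divisor of a quaternion polynomial `A`
(with itself), i.e. `g = mrpf A`. -/
def IsMrpfQ (g : ℝ[X]) (A : Hq[X]) : Prop :=
  g.Monic ∧ RDvdQ g A ∧ ∀ f : ℝ[X], f.Monic → RDvdQ f A → f ∣ g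

/-- `g` is the greatest common monic real polynomial divisor of `c ∈ ℝ[t]` and a quaternion
polynomial `A`, i.e. `g = mrpf(c, A)`. -/
def IsMrpf2 (g : ℝ[X]) (c : ℝ[X]) (A : Hq[X]) : Prop :=
  g.Monic ∧ g ∣ c ∧ RDvdQ g A ∧
    ∀ f : ℝ[X], f.Monic → f ∣ c → RDvdQ f A → f ∣ g

/-- `g` is the greatest common monic real polynomial divisor of `c ∈ ℝ[t]` and two quaternion
polynomials `A` and `B`, i.e. `g = mrpf(c, A, B)`. -/
def IsMrpf3 (g : ℝ[X]) (c : ℝ[X]) (A B : Hq[X]) : Prop :=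
  g.Monic ∧ g ∣ c ∧ RDvdQ g A ∧ RDvdQ g B ∧
    ∀ f : ℝ[X], f.Monic → f ∣ c → RDvdQ f A → RDvdQ f B → f ∣ g

/-- A quaternion polynomial is reduced: `mrpf = 1`, i.e. it has only constant real
polynomial factors. -/
def ReducedQ (A : Hq[X]) : Prop := ∀ f : ℝ[X], f.Monic → RDvdQ f A → f = 1

/-- A dual quaternion polynomial is reduced: `mrpf = 1`. -/
def ReducedD (A : DHq[X]) : Prop := ∀ f : ℝ[X], f.Monic → RDvdD f A → f = 1

/-- Boundedness of a (monic reduced) motion polynomial: `mrpf` of its primal part has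
no real root, equivalently no linear real polynomial `t - a` divides the primal part. -/
def BoundedD (M : DHq[X]) : Prop :=
  ∀ a : ℝ, ¬ RDvdQ (Polynomial.X - Polynomial.C a) (primal M)

/-- A generic motion polynomial: monic, a motion polynomial, with `mrpf` of the primal
part equal to `1`. -/
def GenericD (M : DHq[X]) : Prop :=
  M.Monic ∧ IsMotion M ∧ ReducedQ (primal M)

/-- The monic linear dual quaternion polynomial `t - p - ε d`. -/
def lin (p d : Hq) : DHq[X] := mp (Polynomial.X - Polynomial.C p) (-Polynomial.C d)

/-- `M` admits a factorization into monic linear motion polynomial factors. -/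
def HasLinFact (M : DHq[X]) : Prop :=
  ∃ L : List DHq, (∀ h ∈ L, IsMotion (Polynomial.X - Polynomial.C h)) ∧
    M = (L.map fun h => Polynomial.X - Polynomial.C h).prod

end

theorem aux_fst_star (x : DHq) : (star x).fst = star x.fst := by
  change (inl (star x.fst) + inr (star x.snd) : DHq).fst = _
  simp

theorem aux_snd_star (x : DHq) : (star x).snd = star x.snd := by
  change (inl (star x.fst) + inr (star x.snd) : DHq).snd = _
  simp

theorem aux_star_mul (x y : DHq) : star (x * y) = star y * star x := by
  apply TrivSqZeroExt.ext
  · simp [aux_fst_star]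
  · simp [aux_fst_star, aux_snd_star, add_comm]

theorem aux_star_add (x y : DHq) : star (x + y) = star x + star y := by
  apply TrivSqZeroExt.ext <;> simp [aux_fst_star, aux_snd_star]

theorem aux_star_zero : star (0 : DHq) = 0 := by
  apply TrivSqZeroExt.ext <;> simp [aux_fst_star, aux_snd_star]

theorem aux_norm_comm (x y : DHq) : (x * star x) * y = y * (x * star x) := by
  have h : ∀ a b c : Hq, (a * star b + b * star a) * c = c * (a * star b + b * star a) := by
    intro a b c
    ext <;> simp <;> ring
  have h' : ∀ a c : Hq, (a * star a) * c = c * (a * star a) := by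
    intro a c
    ext <;> simp <;> ring
  apply TrivSqZeroExt.ext
  · simp [aux_fst_star, h']
  · simp only [DualNumber.snd_mul, TrivSqZeroExt.fst_mul, aux_fst_star, aux_snd_star, h', h]
    rw [add_comm]

theorem aux_coeff_cstar (A : DHq[X]) (n : ℕ) : (cstar A).coeff n = star (A.coeff n) := by
  unfold cstar
  rw [Polynomial.sum_def, Polynomial.finsetSum_coeff]
  simp only [Polynomial.coeff_C_mul, Polynomial.coeff_X_pow]
  by_cases h : n ∈ A.support
  · rw [Finset.sum_eq_single n]
    · simp
    · intro b _ hb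
      simp [Ne.symm hb]
    · exact fun h' => absurd h h'
  · rw [Finset.sum_eq_zero]
    · rw [Polynomial.notMem_support_iff.mp h, aux_star_zero]
    · intro b hb
      have : n ≠ b := fun e => h (e ▸ hb)
      simp [this]

theorem aux_cstar_add (A B : DHq[X]) : cstar (A + B) = cstar A + cstar B := by
  ext1 n
  simp [aux_coeff_cstar, aux_star_add]

theorem aux_star_sum {ι : Type*} (s : Finset ι) (f : ι → DHq) :
    star (∑ i ∈ s, f i) = ∑ i ∈ s, star (f i) :=
  map_sum (⟨⟨star, aux_star_zero⟩, aux_star_add⟩ : DHq →+ DHq) f s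

theorem aux_cstar_mul (A B : DHq[X]) : cstar (A * B) = cstar B * cstar A := by
  ext1 n
  rw [aux_coeff_cstar, Polynomial.coeff_mul, Polynomial.coeff_mul, aux_star_sum,
    ← Finset.Nat.sum_antidiagonal_swap]
  simp [aux_coeff_cstar, aux_star_mul]

theorem aux_dPoly_eq (f : ℝ[X]) : dPoly f = f.map ((inlHom Hq Hq).comp (algebraMap ℝ Hq)) := by
  simp [dPoly, dhQ, qPoly, Polynomial.map_map]

theorem aux_dPoly_mul (f g : ℝ[X]) : dPoly (f * g) = dPoly f * dPoly g := by
  simp [aux_dPoly_eq]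

theorem aux_dPoly_one : dPoly 1 = 1 := by
  simp [aux_dPoly_eq]

theorem aux_dPoly_comm (f : ℝ[X]) (A : DHq[X]) : dPoly f * A = A * dPoly f := by
  have h : ∀ (r : ℝ) (x : DHq), inl (algebraMap ℝ Hq r) * x = x * inl (algebraMap ℝ Hq r) := by
    intro r x
    apply TrivSqZeroExt.ext
    · simpa using Algebra.commutes r x.fst
    · simpa using Algebra.commutes r x.snd
  ext1 n
  rw [Polynomial.coeff_mul, Polynomial.coeff_mul, ← Finset.Nat.sum_antidiagonal_swap]
  refine Finset.sum_congr rfl fun p _ => ?_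
  simpa [aux_dPoly_eq] using h (f.coeff p.2) (A.coeff p.1)

theorem aux_cstar_dPoly (f : ℝ[X]) : cstar (dPoly f) = dPoly f := by
  ext1 n
  rw [aux_coeff_cstar]
  apply TrivSqZeroExt.ext <;> simp [aux_dPoly_eq, aux_fst_star, aux_snd_star]

theorem aux_hom_inj : Function.Injective ((inlHom Hq Hq).comp (algebraMap ℝ Hq)) := by
  intro a b h
  have h2 := congrArg TrivSqZeroExt.fst h
  simpa using h2

theorem aux_dPoly_monic {f : ℝ[X]} (h : f.Monic) : (dPoly f).Monic := by
  rw [aux_dPoly_eq]; exact h.map _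

theorem aux_dPoly_natDegree (f : ℝ[X]) : (dPoly f).natDegree = f.natDegree := by
  rw [aux_dPoly_eq]; exact Polynomial.natDegree_map_eq_of_injective aux_hom_inj f

theorem aux_dPoly_inj {f g : ℝ[X]} (h : dPoly f = dPoly g) : f = g := by
  rw [aux_dPoly_eq, aux_dPoly_eq] at h
  exact Polynomial.map_injective _ aux_hom_inj h

theorem aux_dPoly_dvd {F f : ℝ[X]} (hF : F.Monic) (h : dPoly F ∣ dPoly f) : F ∣ f := by
  rw [← Polynomial.modByMonic_eq_zero_iff_dvd hF]
  rw [← Polynomial.modByMonic_eq_zero_iff_dvd (aux_dPoly_monic hF)] at h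
  rw [aux_dPoly_eq, aux_dPoly_eq, ← Polynomial.map_modByMonic _ hF] at h
  apply Polynomial.map_injective _ aux_hom_inj
  rw [h, Polynomial.map_zero]

theorem aux_primal_dPoly (f : ℝ[X]) : primal (dPoly f) = qPoly f := by
  ext1 n
  simp [primal, aux_dPoly_eq, qPoly]

theorem aux_primal_mul (A B : DHq[X]) : primal (A * B) = primal A * primal B := by
  simp [primal]

theorem aux_primal_add (A B : DHq[X]) : primal (A + B) = primal A + primal B := by
  simp [primal]

theorem aux_primal_mp (P D : Hq[X]) : primal (mp P D) = P := by
  ext1 n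
  simp [primal, mp, dhQ]

theorem aux_cstar_X_sub (H : DHq) :
    cstar (Polynomial.X - Polynomial.C H) = Polynomial.X - Polynomial.C (star H) := by
  have hn : star (-H) = - star H := by
    apply TrivSqZeroExt.ext <;> simp [aux_fst_star, aux_snd_star]
  have h1 : star (1 : DHq) = 1 := by
    apply TrivSqZeroExt.ext <;> simp [aux_fst_star, aux_snd_star]
  ext1 n
  rw [aux_coeff_cstar]
  rcases n with _ | _ | n
  · simp [hn]
  · simp [h1, Polynomial.coeff_C, aux_star_zero]
  · simp [Polynomial.coeff_X, Polynomial.coeff_C, aux_star_zero]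

theorem aux_cstar_C (H : DHq) : cstar (Polynomial.C H) = Polynomial.C (star H) := by
  ext1 n
  rw [aux_coeff_cstar, Polynomial.coeff_C, Polynomial.coeff_C]
  split_ifs <;> simp [aux_star_zero]

/-- Key step: an irreducible factor of the norm splits off a linear left factor. -/
theorem aux_step (M : DHq[X]) (F : ℝ[X]) (hF : F.Monic) (hirr : Irreducible F)
    (hdvd : dPoly F ∣ M * cstar M) (hnd : ¬ RDvdQ F (primal M)) :
    ∃ (H : DHq) (M' : DHq[X]), M = (Polynomial.X - Polynomial.C H) * M' ∧
      (Polynomial.X - Polynomial.C H) * cstar (Polynomial.X - Polynomial.C H) = dPoly F := by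
  have hFm := aux_dPoly_monic hF
  have hd2 : F.natDegree ≤ 2 := hirr.natDegree_le_two
  have hd0 : 0 < F.natDegree := hirr.natDegree_pos
  obtain ⟨Q, hQ⟩ : ∃ Q, M %ₘ dPoly F + dPoly F * Q = M := ⟨_, Polynomial.modByMonic_add_div M _⟩
  have hRdeg : (M %ₘ dPoly F).natDegree < F.natDegree := by
    rw [← aux_dPoly_natDegree]
    apply Polynomial.natDegree_modByMonic_lt M hFm
    intro h
    have := aux_dPoly_natDegree F
    rw [h, Polynomial.natDegree_one] at this
    omega
  generalize M %ₘ dPoly F = R at hQ hRdeg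
  have hRR : dPoly F ∣ R * cstar R := by
    have : M * cstar M = R * cstar R + dPoly F * (R * cstar Q + Q * cstar M) := by
      conv_lhs => rw [← hQ]
      have e : cstar M = cstar R + cstar Q * dPoly F := by
        rw [← hQ, aux_cstar_add, aux_cstar_mul, aux_cstar_dPoly]
      rw [hQ, e, ← aux_dPoly_comm F (cstar Q)]
      conv_lhs => rw [← hQ]
      have e2 := aux_dPoly_comm F R
      simp only [mul_add, add_mul, ← mul_assoc, e2]
      abel
    rw [this] at hdvd
    exact (dvd_add_left (Dvd.intro _ rfl)).mp hdvd
  obtain ⟨B, hB⟩ := hRR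
  have hR1 := Polynomial.eq_X_add_C_of_natDegree_le_one (p := R) (by omega)
  have hr1 : (R.coeff 1).fst ≠ 0 := by
    intro h0
    have hpR : primal R = Polynomial.C (R.coeff 0).fst := by
      ext1 n
      rcases n with _ | _ | n
      · simp [primal]
      · simp [primal, h0]
      · have : R.coeff (n + 2) = 0 := Polynomial.coeff_eq_zero_of_natDegree_lt (by omega)
        simp [primal, this]
    have hpR' : primal (cstar R) = Polynomial.C (star (R.coeff 0).fst) := by
      ext1 n
      rcases n with _ | _ | n
      · simp [primal, aux_coeff_cstar, aux_fst_star]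
      · simp [primal, aux_coeff_cstar, aux_fst_star, h0]
      · have : R.coeff (n + 2) = 0 := Polynomial.coeff_eq_zero_of_natDegree_lt (by omega)
        simp [primal, aux_coeff_cstar, aux_fst_star, this]
    have h1 := congrArg primal hB
    rw [aux_primal_mul, aux_primal_mul, hpR, hpR', aux_primal_dPoly, ← Polynomial.C_mul] at h1
    have hqm : (qPoly F).Monic := hF.map _
    have hqd : (qPoly F).natDegree = F.natDegree := hF.natDegree_map _
    have hB0 : primal B = 0 := by
      by_contra hne
      have h2 := congrArg Polynomial.natDegree h1
      rw [Polynomial.natDegree_C, hqm.natDegree_mul' hne] at h2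
      omega
    rw [hB0, mul_zero, Polynomial.C_eq_zero] at h1
    have h3 : (R.coeff 0).fst = 0 := by
      rcases mul_eq_zero.mp h1 with h | h
      · exact h
      · exact star_eq_zero.mp h
    apply hnd
    refine ⟨primal Q, ?_⟩
    rw [← aux_primal_dPoly, ← aux_primal_mul]
    conv_lhs => rw [← hQ]
    rw [aux_primal_add, hpR, h3, Polynomial.C_0, zero_add]
  have hF2 : F.natDegree = 2 := by
    by_contra hne
    apply hr1
    rw [Polynomial.coeff_eq_zero_of_natDegree_lt (by omega)]
    simp
  generalize R.coeff 1 = a at hR1 hr1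
  generalize R.coeff 0 = b at hR1
  have hua : IsUnit a := by
    rw [TrivSqZeroExt.isUnit_iff_isUnit_fst]; exact hr1.isUnit
  obtain ⟨a', ha1, ha2⟩ : ∃ a' : DHq, a * a' = 1 ∧ a' * a = 1 :=
    ⟨_, hua.mul_val_inv, hua.val_inv_mul⟩
  have hun : IsUnit (a * star a) := by
    rw [TrivSqZeroExt.isUnit_iff_isUnit_fst, fst_mul, aux_fst_star]
    exact (mul_ne_zero hr1 (star_ne_zero.mpr hr1)).isUnit
  obtain ⟨n', hn1, hn2⟩ : ∃ n' : DHq, (a * star a) * n' = 1 ∧ n' * (a * star a) = 1 :=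
    ⟨_, hun.mul_val_inv, hun.val_inv_mul⟩
  set H : DHq := -(b * a') with hH
  have hRf : R = (Polynomial.X - Polynomial.C H) * Polynomial.C a := by
    rw [hR1, hH, sub_mul, ← Polynomial.C_mul, Polynomial.X_mul_C, neg_mul, mul_assoc, ha2]
    simp
  have hmL : (Polynomial.X - Polynomial.C H).Monic := Polynomial.monic_X_sub_C H
  have hmL' : (cstar (Polynomial.X - Polynomial.C H)).Monic := by
    rw [aux_cstar_X_sub]; exact Polynomial.monic_X_sub_C _
  have hLd : ((Polynomial.X - Polynomial.C H) * cstar (Polynomial.X - Polynomial.C H)).natDegree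
      = 2 := by
    rw [hmL.natDegree_mul hmL', aux_cstar_X_sub, Polynomial.natDegree_X_sub_C,
      Polynomial.natDegree_X_sub_C]
  have hLm := hmL.mul hmL'
  have hcomm : ∀ A : DHq[X], Polynomial.C (a * star a) * A = A * Polynomial.C (a * star a) := by
    intro A
    ext1 n
    rw [Polynomial.coeff_C_mul, Polynomial.coeff_mul_C, aux_norm_comm]
  have hnorm : (Polynomial.X - Polynomial.C H) * cstar (Polynomial.X - Polynomial.C H)
      = dPoly F := by
    have h1 : Polynomial.C (a * star a) *
        ((Polynomial.X - Polynomial.C H) * cstar (Polynomial.X - Polynomial.C H)) =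
        dPoly F * B := by
      rw [← hB, hRf, aux_cstar_mul, aux_cstar_C, ← mul_assoc, hcomm, Polynomial.C_mul]
      simp only [mul_assoc]
    have h2 : (Polynomial.X - Polynomial.C H) * cstar (Polynomial.X - Polynomial.C H) =
        dPoly F * (Polynomial.C n' * B) := by
      rw [← mul_assoc, aux_dPoly_comm, mul_assoc, ← h1, ← mul_assoc, ← Polynomial.C_mul, hn2,
        Polynomial.C_1, one_mul]
    have h3 : (Polynomial.C n' * B).Monic := hFm.of_mul_monic_left (h2 ▸ hLm)
    have h4 := congrArg Polynomial.natDegree h2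
    rw [hLd, hFm.natDegree_mul h3, aux_dPoly_natDegree, hF2] at h4
    have h5 : Polynomial.C n' * B = 1 := (Polynomial.Monic.natDegree_eq_zero h3).mp (by omega)
    rw [h2, h5, mul_one]
  refine ⟨H, Polynomial.C a + cstar (Polynomial.X - Polynomial.C H) * Q, ?_, hnorm⟩
  rw [mul_add, ← hRf, ← mul_assoc, hnorm, hQ]

theorem aux_main (k : ℕ) : ∀ (M : DHq[X]) (f G : ℝ[X]), G.natDegree = k → f ≠ 0 →
    M * cstar M = dPoly f → G.Monic → G ∣ f →
    (∀ g : ℝ[X], g.Monic → g ∣ G → RDvdQ g (primal M) → g = 1) →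
    ∃ M₁ M₂ : DHq[X], IsMotion M₂ ∧ HasLinFact M₁ ∧
      dPoly G = M₁ * cstar M₁ ∧ M = M₁ * M₂ := by
  induction k using Nat.strong_induction_on with
  | _ k ih =>
  intro M f G hk hf hMf hG hGf hGP
  by_cases hG1 : G = 1
  · refine ⟨1, M, ⟨f, hf, hMf⟩, ⟨[], by simp, by simp⟩, ?_, by simp⟩
    have := aux_cstar_dPoly 1
    rw [aux_dPoly_one] at this
    rw [hG1, aux_dPoly_one, this, one_mul]
  have hnu : ¬ IsUnit G := fun h => hG1 (hG.eq_one_of_isUnit h)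
  obtain ⟨F, hF, hirr, G', rfl⟩ := Polynomial.exists_monic_irreducible_factor G hnu
  obtain ⟨q, rfl⟩ := hGf
  have hnd : ¬ RDvdQ F (primal M) := by
    intro h
    have := hGP F hF (Dvd.intro _ rfl) h
    exact hirr.not_isUnit (this ▸ isUnit_one)
  have hG' : G'.Monic := hF.of_mul_monic_left hG
  have hFm := aux_dPoly_monic hF
  obtain ⟨H, M', hM, hn⟩ := aux_step M F hF hirr
    (by rw [hMf, mul_assoc, aux_dPoly_mul]; exact Dvd.intro _ rfl) hnd
  have hmL : (Polynomial.X - Polynomial.C H).Monic := Polynomial.monic_X_sub_C H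
  have hmL' : (cstar (Polynomial.X - Polynomial.C H)).Monic := by
    rw [aux_cstar_X_sub]; exact Polynomial.monic_X_sub_C _
  have hlm : IsMotion (Polynomial.X - Polynomial.C H) := ⟨F, hF.ne_zero, hn⟩
  rw [hM, aux_cstar_mul] at hMf
  subst hM
  generalize hL : Polynomial.X - Polynomial.C H = L at *
  have hn' : cstar L * L = dPoly F := by
    apply hmL.isRegular.left
    change L * (cstar L * L) = L * dPoly F
    rw [← mul_assoc, hn, aux_dPoly_comm]
  have hN : M' * cstar M' = dPoly (G' * q) := by
    apply hFm.isRegular.left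
    apply hmL'.isRegular.right
    change dPoly F * (M' * cstar M') * cstar L = dPoly F * dPoly (G' * q) * cstar L
    rw [← aux_dPoly_mul, ← mul_assoc F, aux_dPoly_comm _ (cstar L), ← hMf, ← hn']
    simp only [mul_assoc]
  have hdeg : G'.natDegree < k := by
    rw [← hk, hF.natDegree_mul hG']
    have := hirr.natDegree_pos
    omega
  obtain ⟨M₁, M₂, h2, ⟨l, hl, hl'⟩, h4, h5⟩ := ih _ hdeg M' (G' * q) G' rfl
    (by intro h; apply hf; rw [mul_assoc, h, mul_zero]) hN hG' (Dvd.intro _ rfl) (by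
      rintro g hg hgG ⟨B, hB⟩
      refine hGP g hg (hgG.mul_left F) ⟨primal L * B, ?_⟩
      rw [aux_primal_mul, hB, ← mul_assoc, ← mul_assoc, ← aux_primal_dPoly, ← aux_primal_mul,
        ← aux_primal_mul, aux_dPoly_comm])
  refine ⟨L * M₁, M₂, h2, ⟨H :: l, ?_, ?_⟩, ?_, ?_⟩
  · intro h hh
    rcases List.mem_cons.mp hh with rfl | hh
    · rw [hL]; exact hlm
    · exact hl h hh
  · rw [List.map_cons, List.prod_cons, hL, hl']
  · rw [aux_cstar_mul, mul_assoc, ← mul_assoc M₁, ← h4, aux_dPoly_comm, ← mul_assoc, hn,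
      aux_dPoly_mul]
  · rw [h5, mul_assoc]

/-- If `G` is a monic real divisor of `ν(M)` with `mrpf(G, P) = 1`, then `M` has a
left factor `M₁` with norm `G` admitting a factorization into monic linear motion
polynomial factors. -/
theorem left_factor_with_norm_G
    (P D : Hq[X]) (M : DHq[X]) (hM : M = mp P D)
    (hmonic : M.Monic) (hmotion : IsMotion M)
    (G : ℝ[X]) (hG : G.Monic) (hGdvd : RDvdD G (M * cstar M))
    (hGP : ∀ f : ℝ[X], f.Monic → f ∣ G → RDvdQ f P → f = 1) :
    ∃ M₁ M₂ : DHq[X], IsMotion M₁ ∧ IsMotion M₂ ∧ HasLinFact M₁ ∧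
      dPoly G = M₁ * cstar M₁ ∧ M = M₁ * M₂ := by
  obtain ⟨f, hf, hMf⟩ := hmotion
  have hP : primal M = P := by rw [hM, aux_primal_mp]
  have hGf : G ∣ f := by
    apply aux_dPoly_dvd hG
    rw [← hMf]
    exact hGdvd
  obtain ⟨M₁, M₂, h2, h3, h4, h5⟩ := aux_main _ M f G rfl hf hMf hG hGf (by rwa [hP])
  exact ⟨M₁, M₂, ⟨G, hG.ne_zero, h4.symm⟩, h2, h3, h4, h5⟩
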